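/- arXiv:2605.30813 — 3 statements merged into one kernel-verified Lean document; each statement's English description precedes it below -/
import Mathlib

section
/- Prefix Consistency: let D be a dictionary over a finite alphabet Σ and s a string, and let φ = 𝕋_D(s). Then for every prefix μ of the token list φ, one has 𝕋_D(π(μ)) = μ; that is, every prefix of the BPE tokenization of s is exactly the BPE tokenization of the corresponding prefix of s. -/
/-!
Common BPE formalization preamble.

A token is a (nonempty) string over the alphabet `α`, modeled as `List α`.
A merge rule is a pair of tokens; a dictionary is an ordered list of rules
(earlier rules have strictly higher priority).
-/

namespace BPE

variable {α : Type*} [DecidableEq α]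

/-- A token is a string over the alphabet (nonemptiness is imposed by hypotheses). -/
abbrev Token (α : Type*) := List α

/-- A merge rule is an ordered pair of tokens. -/
abbrev Rule (α : Type*) := Token α × Token α

/-- A dictionary is an ordered list of merge rules; earlier = higher priority. -/
abbrev Dict (α : Type*) := List (Rule α)

/-- Apply a single merge rule to a token list, scanning left to right and replacing
each adjacent occurrence of `r.1` followed by `r.2` by the concatenated token,
resuming the scan after the newly formed token (no overlaps). -/
def applyRule (r : Rule α) : List (Token α) → List (Token α)
  | [] => []
  | [t] => [t]
  | t :: u :: rest =>
      if t = r.1 ∧ u = r.2 then (r.1 ++ r.2) :: applyRule r rest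
      else t :: applyRule r (u :: rest)

/-- `φ₀(s)`: the list of single-character tokens of `s`. -/
def phi0 (s : List α) : List (Token α) := s.map (fun c => [c])

/-- `φ_k(s)`: the token list after applying the first `k` rules of `D` to `s`. -/
def phiK (D : Dict α) (k : ℕ) (s : List α) : List (Token α) :=
  (D.take k).foldl (fun φ r => applyRule r φ) (phi0 s)

/-- The BPE tokenization `𝕋_D(s)`. -/
def tokenize (D : Dict α) (s : List α) : List (Token α) :=
  phiK D D.length s

/-- Detokenization `π`: concatenation of the tokens. -/
def detok (φ : List (Token α)) : List α := φ.flatten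

/-- A dictionary is valid if all rule components are genuine (nonempty) tokens. -/
def ValidDict (D : Dict α) : Prop := ∀ r ∈ D, r.1 ≠ [] ∧ r.2 ≠ []

/-- A token `t` is canonical if `𝕋_D(t) = [t]`. -/
def IsCanonical (D : Dict α) (t : Token α) : Prop := tokenize D t = [t]

/-- The last token `θ(s)`: last element of `𝕋_D(s)` (defaulting to `[]`). -/
def theta (D : Dict α) (s : List α) : Token α := (tokenize D s).getLastD []

/-- `j` (0-based) is the index of the canonical rule of `t`:
`φ_j(t)` has exactly two tokens and `φ_{j+1}(t) = [t]`. -/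
def IsCanonicalRuleIdx (D : Dict α) (t : Token α) (j : ℕ) : Prop :=
  j < D.length ∧ (phiK D j t).length = 2 ∧ phiK D (j + 1) t = [t]

open Classical in
/-- The (0-based) index of the canonical rule of `t` (junk value `0` if none exists). -/
noncomputable def canonIdx (D : Dict α) (t : Token α) : ℕ :=
  if h : ∃ j, IsCanonicalRuleIdx D t j then h.choose else 0

/-- Predecessor `pre(t)`: first token of the two-token stage `φ_{j-1}(t)`. -/
noncomputable def pre (D : Dict α) (t : Token α) : Token α :=
  (phiK D (canonIdx D t) t).headD []

/-- Successor `suc(t)`: second token of the two-token stage `φ_{j-1}(t)`. -/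
noncomputable def suc (D : Dict α) (t : Token α) : Token α :=
  (phiK D (canonIdx D t) t).getLastD []

/-- `InPath D x a` means `a ∈ P(x)`: `a` is obtained from `x` by iterating `suc`,
i.e. `a` lies on the ancestor path of `x` in the Successor Forest. -/
def InPath (D : Dict α) (x a : Token α) : Prop :=
  ∃ n : ℕ, (suc D)^[n] x = a

/-- `s` with the suffix `u` removed. -/
def dropSuffix (s u : List α) : List α := s.take (s.length - u.length)

/-- The Prefix Last-Token Condition of the canonical suffix token `t`
with respect to the string `s`. Atomic tokens satisfy it by definition;
a non-atomic token must satisfy Reachability and Priority dominance. -/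
def PLTC (D : Dict α) (s t : Token α) : Prop :=
  t.length = 1 ∨
    (1 < t.length ∧
      InPath D (theta D (dropSuffix s (suc D t))) (pre D t) ∧
      (theta D (dropSuffix s (suc D t)) ≠ pre D t →
        ∀ u : Token α, 1 < u.length → IsCanonical D u → suc D u = pre D t →
          InPath D (theta D (dropSuffix s (suc D t))) u →
          canonIdx D t < canonIdx D u))

/-!
Applying a rule never looks back, and a token that it leaves unmerged stays unmerged when the input
is cut right after it; hence every prefix of the output is the output on some prefix of the input.
Iterating over the dictionary, a prefix `μ` of `𝕋_D(s)` is the image of a prefix `ν` of `φ₀(s)`.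
Merging preserves the underlying string, so `π(μ) = π(ν)`; and `ν`, being made of single characters,
is the list `φ₀(π(ν))` from which the tokenization of `π(μ)` starts.
-/

/-- The token list obtained from `φ` by applying all the rules of `D` in order of priority:
the process that computes `𝕋_D`, started from an arbitrary token list. -/
def applyDict (D : Dict α) (φ : List (Token α)) : List (Token α) :=
  D.foldl (fun φ r => applyRule r φ) φ

theorem tokenize_eq_applyDict (D : Dict α) (s : List α) :
    tokenize D s = applyDict D (phi0 s) := by
  rw [tokenize, phiK, List.take_length, applyDict]

theorem detok_applyRule (r : Rule α) (φ : List (Token α)) :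
    detok (applyRule r φ) = detok φ := by
  unfold detok
  fun_induction applyRule r φ with
  | case1 => rfl
  | case2 => rfl
  | case3 t u rest merge ih => simp [ih, merge.1, merge.2]
  | case4 t u rest _ ih => rw [List.flatten_cons, ih, ← List.flatten_cons]

theorem detok_applyDict (D : Dict α) (φ : List (Token α)) :
    detok (applyDict D φ) = detok φ := by
  induction D generalizing φ with
  | nil => rfl
  | cons r D ih => exact (ih _).trans (detok_applyRule r φ)

theorem exists_prefix_applyRule_eq {r : Rule α} {φ μ : List (Token α)}
    (hμ : μ <+: applyRule r φ) : ∃ ν, ν <+: φ ∧ applyRule r ν = μ := by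
  fun_induction applyRule r φ generalizing μ with
  | case1 => exact ⟨[], List.nil_prefix, (List.prefix_nil.1 hμ).symm⟩
  | case2 t =>
    obtain rfl | ⟨μ', rfl, hμ'⟩ := List.prefix_cons_iff.1 hμ
    · exact ⟨[], List.nil_prefix, rfl⟩
    · obtain rfl := List.prefix_nil.1 hμ'
      exact ⟨[t], hμ, rfl⟩
  | case3 t u rest merge ih =>
    obtain rfl | ⟨μ', rfl, hμ'⟩ := List.prefix_cons_iff.1 hμ
    · exact ⟨[], List.nil_prefix, rfl⟩
    · obtain ⟨ν, hν, rfl⟩ := ih hμ'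
      exact ⟨t :: u :: ν, by simpa using hν, if_pos merge⟩
  | case4 t u rest no_merge ih =>
    obtain rfl | ⟨μ', rfl, hμ'⟩ := List.prefix_cons_iff.1 hμ
    · exact ⟨[], List.nil_prefix, rfl⟩
    · obtain ⟨ν, hν, rfl⟩ := ih hμ'
      refine ⟨t :: ν, by simpa using hν, ?_⟩
      obtain rfl | ⟨ν', rfl, -⟩ := List.prefix_cons_iff.1 hν
      · rfl
      · exact if_neg no_merge

theorem exists_prefix_applyDict_eq {D : Dict α} {φ μ : List (Token α)}
    (hμ : μ <+: applyDict D φ) : ∃ ν, ν <+: φ ∧ applyDict D ν = μ := by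
  induction D generalizing φ with
  | nil => exact ⟨μ, hμ, rfl⟩
  | cons r D ih =>
    obtain ⟨κ, hκ, rfl⟩ := ih hμ
    obtain ⟨ν, hν, rfl⟩ := exists_prefix_applyRule_eq hκ
    exact ⟨ν, hν, rfl⟩

theorem detok_phi0 {β : Type*} (s : List β) : detok (phi0 s) = s := by
  simp [detok, phi0, ← List.flatMap_def]

theorem phi0_detok_of_prefix_phi0 {β : Type*} {s : List β} {ν : List (Token β)}
    (hν : ν <+: phi0 s) : phi0 (detok ν) = ν := by
  obtain ⟨t, -, rfl⟩ := List.prefix_map_iff.1 hν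
  exact congrArg phi0 (detok_phi0 t)

theorem prefix_consistency_general (D : Dict α) (s : List α) (μ : List (Token α))
    (hμ : μ <+: tokenize D s) : tokenize D (detok μ) = μ := by
  rw [tokenize_eq_applyDict] at hμ
  obtain ⟨ν, hν, rfl⟩ := exists_prefix_applyDict_eq hμ
  rw [tokenize_eq_applyDict, detok_applyDict, phi0_detok_of_prefix_phi0 hν]

/-- **Prefix Consistency.** Every prefix `μ` of the BPE tokenization `𝕋_D(s)`
is exactly the BPE tokenization of the corresponding prefix `π(μ)` of `s`. -/
theorem prefix_consistency [Fintype α] (D : Dict α) (hD : ValidDict D)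
    (s : List α) (μ : List (Token α)) (hμ : μ <+: tokenize D s) :
    tokenize D (detok μ) = μ :=
  prefix_consistency_general D s μ hμ

end BPE
end

section
/- Well-definedness of the canonical rule: let t be a non-atomic canonical token. Then there exists exactly one index j with 1 ≤ j ≤ m such that the list φ_{j−1}(t) has length 2 and φ_j(t) = [t]; moreover, writing φ_{j−1}(t) = [x, y], the rule r_j equals the pair (x, y) and the concatenation xy equals t. -/
/-!
Common BPE formalization preamble.

A token is a (nonempty) string over the alphabet `α`, modeled as `List α`.
A merge rule is a pair of tokens; a dictionary is an ordered list of rules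
(earlier rules have strictly higher priority).
-/

namespace BPE

variable {α : Type*} [DecidableEq α]

/-!
One rule application at most halves the number of tokens, never increases it, and preserves the
concatenation. Hence the stage lengths descend from `|t| ≥ 2` to `1` without increasing, and the
last stage with more than one token has exactly two. The next stage has a single token, which must
be `t` since every stage concatenates to `t`. The index is unique because the lengths fall below
two only once.
-/

theorem length_applyRule_le (r : Rule α) (φ : List (Token α)) :
    (applyRule r φ).length ≤ φ.length := by
  fun_induction applyRule r φ <;> grind

theorem length_le_two_mul_length_applyRule (r : Rule α) (φ : List (Token α)) :
    φ.length ≤ 2 * (applyRule r φ).length := by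
  fun_induction applyRule r φ <;> grind

theorem applyRule_pair_eq_singleton_iff {r : Rule α} {x y t : Token α} :
    applyRule r [x, y] = [t] ↔ r = (x, y) ∧ x ++ y = t := by
  grind [applyRule]

theorem phiK_succ {D : Dict α} {k : ℕ} (hk : k < D.length) (s : List α) :
    phiK D (k + 1) s = applyRule D[k] (phiK D k s) := by
  rw [phiK, List.take_succ_eq_append_getElem hk, List.foldl_concat, phiK]

theorem phiK_eq_tokenize_of_length_le {D : Dict α} {k : ℕ} (hk : D.length ≤ k) (s : List α) :
    phiK D k s = tokenize D s := by
  rw [tokenize, phiK, phiK, List.take_of_length_le hk, List.take_length]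

theorem detok_phiK (D : Dict α) (k : ℕ) (s : List α) : detok (phiK D k s) = s :=
  List.foldlRecOn (D.take k) _ (motive := fun φ => detok φ = s)
    (by simp [detok, phi0, ← List.flatMap_def]) fun φ hφ r _ => (detok_applyRule r φ).trans hφ

theorem phiK_eq_singleton_of_length_eq_one {D : Dict α} {k : ℕ} {s : List α}
    (h : (phiK D k s).length = 1) : phiK D k s = [s] := by
  obtain ⟨u, hu⟩ := List.length_eq_one_iff.mp h
  simpa [hu, detok] using detok_phiK D k s

theorem antitone_length_phiK (D : Dict α) (s : List α) :
    Antitone fun k => (phiK D k s).length := by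
  refine antitone_nat_of_succ_le fun k => ?_
  rcases lt_or_ge k D.length with hk | hk
  · simpa only [phiK_succ hk] using length_applyRule_le D[k] (phiK D k s)
  · rw [phiK_eq_tokenize_of_length_le hk, phiK_eq_tokenize_of_length_le (hk.trans k.le_succ)]

theorem exists_isCanonicalRuleIdx {D : Dict α} {t : Token α} (ht : 1 < t.length)
    (hc : IsCanonical D t) : ∃ j, IsCanonicalRuleIdx D t j := by
  have hzero : ¬ (phiK D 0 t).length ≤ 1 := by simpa [phiK, phi0] using ht
  have hlast : (phiK D D.length t).length ≤ 1 := (congrArg List.length hc).le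
  obtain ⟨j, hj, hsucc⟩ :=
    Nat.exists_not_and_succ_of_not_zero_of_exists (p := fun k => (phiK D k t).length ≤ 1)
      hzero ⟨D.length, hlast⟩
  have hlt : j < D.length := by
    by_contra! hle
    exact hj ((antitone_length_phiK D t hle).trans hlast)
  have hhalf : (phiK D j t).length ≤ 2 * (phiK D (j + 1) t).length := by
    simpa only [phiK_succ hlt] using length_le_two_mul_length_applyRule D[j] (phiK D j t)
  exact ⟨j, hlt, by lia, phiK_eq_singleton_of_length_eq_one (by lia)⟩

theorem IsCanonicalRuleIdx.le {D : Dict α} {t : Token α} {i j : ℕ}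
    (hi : IsCanonicalRuleIdx D t i) (hj : IsCanonicalRuleIdx D t j) : i ≤ j := by
  obtain ⟨-, hlen, -⟩ := hi
  obtain ⟨-, -, hsucc⟩ := hj
  by_contra! hji
  have : (phiK D i t).length ≤ (phiK D (j + 1) t).length := antitone_length_phiK D t hji
  simp [hlen, hsucc] at this

theorem existsUnique_isCanonicalRuleIdx {D : Dict α} {t : Token α} (ht : 1 < t.length)
    (hc : IsCanonical D t) : ∃! j, IsCanonicalRuleIdx D t j :=
  existsUnique_of_exists_of_unique (exists_isCanonicalRuleIdx ht hc)
    fun _ _ hi hj => (hi.le hj).antisymm (hj.le hi)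

theorem getElem_eq_and_append_eq_of_phiK_eq_pair {D : Dict α} {s : List α} {t x y : Token α}
    {j : ℕ} (hj : j < D.length) (hpair : phiK D j s = [x, y]) (hsucc : phiK D (j + 1) s = [t]) :
    D[j] = (x, y) ∧ x ++ y = t := by
  rwa [phiK_succ hj, hpair, applyRule_pair_eq_singleton_iff] at hsucc

theorem canonical_rule_well_defined_general (D : Dict α) (t : Token α) (ht : 1 < t.length)
    (hc : IsCanonical D t) :
    (∃! j, IsCanonicalRuleIdx D t j) ∧
      ∀ j x y, j < D.length → phiK D j t = [x, y] → phiK D (j + 1) t = [t] →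
        D[j]? = some (x, y) ∧ x ++ y = t := by
  refine ⟨existsUnique_isCanonicalRuleIdx ht hc, fun j x y hj hpair hsucc => ?_⟩
  rw [List.getElem?_eq_getElem hj, Option.some_inj]
  exact getElem_eq_and_append_eq_of_phiK_eq_pair hj hpair hsucc

/-- **Well-definedness of the canonical rule.** For a non-atomic canonical token `t`,
there is exactly one (0-based) index `j` with `j < |D|`, `|φ_j(t)| = 2` and
`φ_{j+1}(t) = [t]`; moreover if `φ_j(t) = [x, y]` then the `j`-th rule of `D`
is exactly `(x, y)` and `x ++ y = t`. -/
theorem canonical_rule_well_defined [Fintype α] (D : Dict α) (hD : ValidDict D)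
    (t : Token α) (ht : 1 < t.length) (hc : IsCanonical D t) :
    (∃! j, IsCanonicalRuleIdx D t j) ∧
      ∀ j x y, j < D.length → phiK D j t = [x, y] → phiK D (j + 1) t = [t] →
        D[j]? = some (x, y) ∧ x ++ y = t :=
  canonical_rule_well_defined_general D t ht hc

end BPE
end

section
/- Canonical closure under decomposition: let t be a non-atomic canonical token and suppose that for some index j, φ_{j−1}(t) = [x, y] and φ_j(t) = [t]. Then both components are canonical: 𝕋_D(x) = [x] and 𝕋_D(y) = [y]. -/
/-!
Common BPE formalization preamble.

A token is a (nonempty) string over the alphabet `α`, modeled as `List α`.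
A merge rule is a pair of tokens; a dictionary is an ordered list of rules
(earlier rules have strictly higher priority).
-/

namespace BPE

variable {α : Type*} [DecidableEq α]

theorem applyDict_singleton (D : Dict α) (t : Token α) : applyDict D [t] = [t] := by
  induction D with
  | nil => rfl
  | cons _ _ ih => exact ih

theorem isCanonical_of_phiK_eq_singleton {D : Dict α} {k : ℕ} {t : Token α}
    (h : phiK D k t = [t]) : IsCanonical D t :=
  calc
    tokenize D t = applyDict (D.take k ++ D.drop k) (phi0 t) := by
      rw [List.take_append_drop, tokenize, phiK, List.take_length, applyDict]
    _ = applyDict (D.drop k) (phiK D k t) := List.foldl_append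
    _ = [t] := by rw [h, applyDict_singleton]

theorem exists_append_of_applyRule_eq_append {r : Rule α} {φ A B : List (Token α)}
    (h : applyRule r φ = A ++ B) :
    ∃ φ₁ φ₂, φ = φ₁ ++ φ₂ ∧ applyRule r φ₁ = A ∧ applyRule r φ₂ = B := by
  induction φ using applyRule.induct r generalizing A with
  | case1 =>
    obtain ⟨rfl, rfl⟩ := List.nil_eq_append_iff.1 h
    exact ⟨[], [], rfl, rfl, rfl⟩
  | case2 t =>
    obtain ⟨rfl, rfl⟩ | ⟨rfl, rfl⟩ := List.singleton_eq_append_iff.1 h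
    · exact ⟨[], [t], rfl, rfl, rfl⟩
    · exact ⟨[t], [], rfl, rfl, rfl⟩
  | case3 t u rest hmatch ih =>
    rw [applyRule, if_pos hmatch] at h
    obtain ⟨rfl, rfl⟩ | ⟨A', rfl, hrest⟩ := List.cons_eq_append_iff.1 h
    · exact ⟨[], t :: u :: rest, rfl, rfl, by rw [applyRule, if_pos hmatch]⟩
    · obtain ⟨φ₁, φ₂, rfl, rfl, rfl⟩ := ih hrest
      exact ⟨t :: u :: φ₁, φ₂, rfl, by rw [applyRule, if_pos hmatch], rfl⟩
  | case4 t u rest hmatch ih =>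
    rw [applyRule, if_neg hmatch] at h
    obtain ⟨rfl, rfl⟩ | ⟨A', rfl, hrest⟩ := List.cons_eq_append_iff.1 h
    · exact ⟨[], t :: u :: rest, rfl, rfl, by rw [applyRule, if_neg hmatch]⟩
    · obtain ⟨φ₁, φ₂, hsplit, rfl, rfl⟩ := ih hrest
      refine ⟨t :: φ₁, φ₂, congrArg (t :: ·) hsplit, ?_, rfl⟩
      -- If `φ₁` is nonempty it begins with `u`, so the scan of `t :: φ₁` again skips `t`.
      obtain ⟨rfl, -⟩ | ⟨φ₁', rfl, -⟩ := List.cons_eq_append_iff.1 hsplit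
      · rfl
      · rw [applyRule, if_neg hmatch]

theorem exists_append_of_applyDict_eq_append {D : Dict α} {φ A B : List (Token α)}
    (h : applyDict D φ = A ++ B) :
    ∃ φ₁ φ₂, φ = φ₁ ++ φ₂ ∧ applyDict D φ₁ = A ∧ applyDict D φ₂ = B := by
  induction D generalizing φ with
  | nil => exact ⟨A, B, h, rfl, rfl⟩
  | cons r D ih =>
    obtain ⟨ψ₁, ψ₂, hψ, rfl, rfl⟩ := ih h
    obtain ⟨φ₁, φ₂, hφ, rfl, rfl⟩ := exists_append_of_applyRule_eq_append hψ
    exact ⟨φ₁, φ₂, hφ, rfl, rfl⟩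

theorem phiK_detok_of_phiK_eq_append {D : Dict α} {k : ℕ} {s : List α} {A B : List (Token α)}
    (h : phiK D k s = A ++ B) : phiK D k (detok A) = A ∧ phiK D k (detok B) = B := by
  obtain ⟨φ₁, φ₂, hφ, hA, hB⟩ := exists_append_of_applyDict_eq_append h
  obtain ⟨s₁, s₂, -, rfl, rfl⟩ := List.map_eq_append_iff.1 hφ
  change phiK D k s₁ = A at hA
  change phiK D k s₂ = B at hB
  subst hA hB
  simp only [detok_phiK, and_self]

theorem phiK_eq_singleton_of_mem_phiK {D : Dict α} {k : ℕ} {s : List α} {u : Token α}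
    (hu : u ∈ phiK D k s) : phiK D k u = [u] := by
  obtain ⟨A, B, hsplit⟩ := List.append_of_mem hu
  have hsuffix : phiK D k (detok (u :: B)) = [u] ++ B := (phiK_detok_of_phiK_eq_append hsplit).2
  simpa only [detok, List.flatten_singleton] using (phiK_detok_of_phiK_eq_append hsuffix).1

theorem canonical_closure_general {D : Dict α} {k : ℕ} {s : List α} {u : Token α}
    (hu : u ∈ phiK D k s) : IsCanonical D u :=
  isCanonical_of_phiK_eq_singleton (phiK_eq_singleton_of_mem_phiK hu)

/-- **Canonical closure under decomposition.** If `t` is a non-atomic canonical token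
with `φ_{j-1}(t) = [x, y]` and `φ_j(t) = [t]`, then `x` and `y` are canonical. -/
theorem canonical_closure [Fintype α] (D : Dict α) (hD : ValidDict D)
    (t : Token α) (ht : 1 < t.length) (hc : IsCanonical D t)
    (j : ℕ) (x y : Token α)
    (h1 : phiK D j t = [x, y]) (h2 : phiK D (j + 1) t = [t]) :
    tokenize D x = [x] ∧ tokenize D y = [y] := by
  exact ⟨canonical_closure_general (h1 ▸ List.mem_cons_self),
    canonical_closure_general (h1 ▸ List.mem_cons_of_mem x List.mem_cons_self)⟩

end BPE
end
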